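/- Let α ∈ (0,2) and β > 0 with αβ < 1, and define S_{α,β}(ω) = −(1/π) Im ∫₀^∞ e^{−ωu} (1 + e^{iπα/2} u^α)^{−β} du for ω > 0 (principal branch). Then lim_{ω→0⁺} ω^{1−αβ} S_{α,β}(ω) = (1/π) Γ(1−αβ) sin(παβ/2). That is, the spectral density of the one-dimensional GFGCC diverges at the origin like (Γ(1−αβ) sin(παβ/2)/π) ω^{αβ−1}, consistent with long range dependence. -/

import Mathlib

open Filter

/-- Spectral density of the one-dimensional GFGCC (Laplace-type representation),
`S_{α,β}(ω) = −(1/π) Im ∫₀^∞ e^{−ωu}(1 + e^{iπα/2}u^α)^{−β} du` (principal branch). -/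
noncomputable def gfgccSpectralDensity (α β ω : ℝ) : ℝ :=
  -(1 / Real.pi) * (∫ u in Set.Ioi (0 : ℝ),
      Complex.exp (-(ω * u : ℝ)) *
        (1 + Complex.exp ((Real.pi : ℂ) * (α : ℂ) / 2 * Complex.I) * (u : ℂ) ^ (α : ℂ))
          ^ (-(β : ℂ))).im

lemma gfgcc_E_im_pos (α : ℝ) (hα : α ∈ Set.Ioo (0 : ℝ) 2) :
    0 < (Complex.exp ((Real.pi : ℂ) * (α : ℂ) / 2 * Complex.I)).im := by
  have h : (Real.pi : ℂ) * (α : ℂ) / 2 = ((Real.pi * α / 2 : ℝ) : ℂ) := by push_cast; ring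
  rw [h, Complex.exp_ofReal_mul_I_im]
  apply Real.sin_pos_of_pos_of_lt_pi
  · have := Real.pi_pos; have := hα.1; positivity
  · have := Real.pi_pos; have := hα.2; nlinarith

lemma gfgcc_im (E : ℂ) (a b : ℝ) : ((a : ℂ) + E * (b : ℂ)).im = E.im * b := by
  simp

/-- pointwise bound -/
lemma gfgcc_bound (E : ℂ) (hE : 0 < E.im) (α β : ℝ) (hβ : 0 < β) (a v : ℝ) (hv : 0 < v) :
    ‖((a : ℂ) + E * ((v ^ α : ℝ) : ℂ)) ^ (-(β : ℂ))‖ ≤ E.im ^ (-β) * v ^ (-(α * β)) := by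
  have hva : 0 < v ^ α := Real.rpow_pos_of_pos hv _
  have him := gfgcc_im E a (v ^ α)
  have hpos : 0 < E.im * v ^ α := by positivity
  have hne : (a : ℂ) + E * ((v ^ α : ℝ) : ℂ) ≠ 0 := by
    intro h
    rw [h] at him
    simp only [Complex.zero_im] at him
    linarith
  rw [show (-(β : ℂ)) = ((-β : ℝ) : ℂ) by push_cast; rfl, Complex.norm_cpow_real]
  have hle : E.im * v ^ α ≤ ‖(a : ℂ) + E * ((v ^ α : ℝ) : ℂ)‖ := by
    rw [← him]
    exact (le_abs_self _).trans (Complex.abs_im_le_norm _)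
  calc _ ≤ (E.im * v ^ α) ^ (-β) :=
        Real.rpow_le_rpow_of_nonpos hpos hle (by linarith)
    _ = _ := by
        rw [Real.mul_rpow hE.le hva.le, ← Real.rpow_mul hv.le]
        congr 2; ring

lemma gfgcc_subst (E : ℂ) (α β ω : ℝ) (hω : 0 < ω) :
    ((ω ^ (1 - α * β) : ℝ) : ℂ) * (∫ u in Set.Ioi (0 : ℝ),
      Complex.exp (-(ω * u : ℝ)) * (1 + E * (u : ℂ) ^ (α : ℂ)) ^ (-(β : ℂ))) =
    ∫ v in Set.Ioi (0 : ℝ), ((Real.exp (-v) : ℝ) : ℂ) *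
      (((ω ^ α : ℝ) : ℂ) + E * ((v ^ α : ℝ) : ℂ)) ^ (-(β : ℂ)) := by
  have h := MeasureTheory.integral_comp_mul_left_Ioi
    (fun v : ℝ => ((Real.exp (-v) : ℝ) : ℂ) *
      (((ω ^ α : ℝ) : ℂ) + E * ((v ^ α : ℝ) : ℂ)) ^ (-(β : ℂ))) 0 hω
  rw [mul_zero] at h
  have h2 : ∀ u ∈ Set.Ioi (0 : ℝ), ((Real.exp (-(ω * u)) : ℝ) : ℂ) *
      (((ω ^ α : ℝ) : ℂ) + E * (((ω * u) ^ α : ℝ) : ℂ)) ^ (-(β : ℂ)) =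
      ((ω ^ (-(α * β)) : ℝ) : ℂ) * (Complex.exp (-(ω * u : ℝ)) *
        (1 + E * (u : ℂ) ^ (α : ℂ)) ^ (-(β : ℂ))) := by
    intro u hu
    have hu : 0 < u := hu
    have hωα : 0 < ω ^ α := Real.rpow_pos_of_pos hω _
    have e1 : ((ω ^ α : ℝ) : ℂ) + E * (((ω * u) ^ α : ℝ) : ℂ) =
        ((ω ^ α : ℝ) : ℂ) * (1 + E * (u : ℂ) ^ (α : ℂ)) := by
      rw [Real.mul_rpow hω.le hu.le, ← Complex.ofReal_cpow hu.le]
      push_cast; ring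
    rw [e1, show (-(β : ℂ)) = ((-β : ℝ) : ℂ) by push_cast; rfl,
      Complex.real_smul.symm, Complex.real_smul.symm, Complex.real_smul.symm]
    have e2 : ((ω ^ α) • (1 + E * (u : ℂ) ^ (α : ℂ))) ^ ((-β : ℝ) : ℂ) =
        ((ω ^ (-(α * β)) : ℝ) : ℂ) * (1 + E * (u : ℂ) ^ (α : ℂ)) ^ ((-β : ℝ) : ℂ) := by
      by_cases hz : (1 + E * (u : ℂ) ^ (α : ℂ)) = 0
      · rw [hz]
        by_cases hb : β = 0
        · simp [hb]
        · have : ((-β : ℝ) : ℂ) ≠ 0 := by simpa using hb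
          simp [hb]
      · rw [Complex.real_smul, Complex.cpow_def_of_ne_zero (mul_ne_zero (by exact_mod_cast hωα.ne') hz),
          Complex.cpow_def_of_ne_zero hz, Complex.log_ofReal_mul hωα hz, add_mul, Complex.exp_add,
          Real.log_rpow hω, Real.rpow_def_of_pos hω]
        push_cast
        congr 2; ring
    rw [e2]
    simp only [Complex.real_smul]
    push_cast
    ring
  rw [MeasureTheory.setIntegral_congr_fun measurableSet_Ioi h2,
    MeasureTheory.integral_const_mul, Complex.real_smul] at h
  have e3 : ω ^ (1 - α * β) = ω * ω ^ (-(α * β)) := by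
    rw [sub_eq_add_neg, Real.rpow_add hω, Real.rpow_one]
  have hω' : (ω : ℂ) ≠ 0 := by exact_mod_cast hω.ne'
  rw [e3, Complex.ofReal_mul, mul_assoc, h]
  push_cast
  rw [← mul_assoc, mul_inv_cancel₀ hω', one_mul]

lemma gfgcc_lim (E : ℂ) (hE : 0 < E.im) (α β : ℝ) (hα : 0 < α) (hβ : 0 < β) (hαβ : α * β < 1) :
    Tendsto (fun ω : ℝ => ∫ v in Set.Ioi (0 : ℝ), ((Real.exp (-v) : ℝ) : ℂ) *
      (((ω ^ α : ℝ) : ℂ) + E * ((v ^ α : ℝ) : ℂ)) ^ (-(β : ℂ)))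
      (nhdsWithin 0 (Set.Ioi 0))
      (nhds (∫ v in Set.Ioi (0 : ℝ), ((Real.exp (-v) : ℝ) : ℂ) *
      (E * ((v ^ α : ℝ) : ℂ)) ^ (-(β : ℂ)))) := by
  apply MeasureTheory.tendsto_integral_filter_of_dominated_convergence
    (fun v => E.im ^ (-β) * (Real.exp (-v) * v ^ ((1 - α * β) - 1)))
  · refine Eventually.of_forall fun ω => ?_
    apply Measurable.aestronglyMeasurable
    fun_prop
  · refine Eventually.of_forall fun ω => ?_
    refine (MeasureTheory.ae_restrict_iff' measurableSet_Ioi).2 (Eventually.of_forall fun v hv => ?_)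
    rw [norm_mul, Complex.norm_real, Real.norm_of_nonneg (Real.exp_pos _).le]
    have := gfgcc_bound E hE α β hβ (ω ^ α) v hv
    rw [show (1 - α * β) - 1 = -(α * β) by ring]
    calc _ ≤ Real.exp (-v) * (E.im ^ (-β) * v ^ (-(α * β))) := by gcongr
      _ = _ := by ring
  · exact (Real.GammaIntegral_convergent (by linarith)).const_mul _
  · refine (MeasureTheory.ae_restrict_iff' measurableSet_Ioi).2 (Eventually.of_forall fun v hv => ?_)
    have hv : 0 < v := hv
    have hva : 0 < v ^ α := Real.rpow_pos_of_pos hv _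
    apply Tendsto.const_mul
    have hsl : E * ((v ^ α : ℝ) : ℂ) ∈ Complex.slitPlane := by
      right
      have := gfgcc_im E 0 (v ^ α)
      rw [Complex.ofReal_zero, zero_add] at this
      rw [this]; positivity
    have hc : ContinuousAt (fun z : ℂ => z ^ (-(β : ℂ))) (E * ((v ^ α : ℝ) : ℂ)) :=
      continuousAt_id.cpow continuousAt_const hsl
    have h0 : Tendsto (fun ω : ℝ => ω ^ α) (nhdsWithin 0 (Set.Ioi 0)) (nhds 0) := by
      have := (Real.continuousAt_rpow_const 0 α (Or.inr hα.le)).tendsto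
      rw [Real.zero_rpow hα.ne'] at this
      exact this.mono_left nhdsWithin_le_nhds
    have h1 : Tendsto (fun ω : ℝ => ((ω ^ α : ℝ) : ℂ) + E * ((v ^ α : ℝ) : ℂ))
        (nhdsWithin 0 (Set.Ioi 0)) (nhds (E * ((v ^ α : ℝ) : ℂ))) := by
      have := ((Complex.continuous_ofReal.tendsto 0).comp h0).add_const (E * ((v ^ α : ℝ) : ℂ))
      simpa using this
    exact hc.tendsto.comp h1

lemma gfgcc_val (α β : ℝ) (hα : α ∈ Set.Ioo (0 : ℝ) 2) (hαβ : α * β < 1) :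
    (∫ v in Set.Ioi (0 : ℝ), ((Real.exp (-v) : ℝ) : ℂ) *
      (Complex.exp ((Real.pi : ℂ) * (α : ℂ) / 2 * Complex.I) * ((v ^ α : ℝ) : ℂ)) ^ (-(β : ℂ))) =
    Complex.exp ((-(Real.pi * α * β / 2) : ℝ) * Complex.I) * (Real.Gamma (1 - α * β) : ℂ) := by
  rw [Real.Gamma_eq_integral (by linarith), ← integral_complex_ofReal,
    ← MeasureTheory.integral_const_mul]
  refine MeasureTheory.setIntegral_congr_fun measurableSet_Ioi fun v hv => ?_
  have hv : 0 < v := hv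
  have hva : 0 < v ^ α := Real.rpow_pos_of_pos hv _
  have hpi := Real.pi_pos
  have hE0 : Complex.exp ((Real.pi : ℂ) * (α : ℂ) / 2 * Complex.I) ≠ 0 := Complex.exp_ne_zero _
  have hlog : Complex.log (Complex.exp ((Real.pi : ℂ) * (α : ℂ) / 2 * Complex.I)) =
      (Real.pi : ℂ) * (α : ℂ) / 2 * Complex.I := by
    have h : (Real.pi : ℂ) * (α : ℂ) / 2 * Complex.I =
      ((Real.pi * α / 2 : ℝ) : ℂ) * Complex.I := by push_cast; ring
    have h3 : (((Real.pi * α / 2 : ℝ) : ℂ) * Complex.I).im = Real.pi * α / 2 := by simp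
    rw [h]
    apply Complex.log_exp
    · rw [h3]; have := mul_pos hpi hα.1; linarith
    · rw [h3]; have := hα.2; nlinarith
  have hne : Complex.exp ((Real.pi : ℂ) * (α : ℂ) / 2 * Complex.I) * ((v ^ α : ℝ) : ℂ) ≠ 0 :=
    mul_ne_zero hE0 (by exact_mod_cast hva.ne')
  rw [Complex.cpow_def_of_ne_zero hne, Complex.log_mul_ofReal _ hva _ hE0, hlog,
    Real.log_rpow hv, Real.rpow_def_of_pos hv]
  push_cast
  rw [← Complex.exp_add, ← Complex.exp_add, ← Complex.exp_add]
  congr 1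
  ring

/-- Low-frequency behavior of the spectral density of the one-dimensional GFGCC in the
long-range-dependence regime `αβ < 1`:
`lim_{ω→0⁺} ω^{1−αβ} S_{α,β}(ω) = (1/π)Γ(1−αβ) sin(παβ/2)`. -/
theorem gfgcc_spectral_low_frequency_lrd (α β : ℝ)
    (hα : α ∈ Set.Ioo (0 : ℝ) 2) (hβ : 0 < β) (hαβ : α * β < 1) :
    Tendsto (fun ω : ℝ => ω ^ (1 - α * β) * gfgccSpectralDensity α β ω)
      (nhdsWithin 0 (Set.Ioi 0))
      (nhds (1 / Real.pi * Real.Gamma (1 - α * β) * Real.sin (Real.pi * α * β / 2))) := by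
  have h := gfgcc_lim _ (gfgcc_E_im_pos α hα) α β hα.1 hβ hαβ
  rw [gfgcc_val α β hα hαβ] at h
  have h2 := ((Complex.continuous_im.tendsto _).comp h).const_mul (-(1 / Real.pi))
  have e : -(1 / Real.pi) * (Complex.exp ((-(Real.pi * α * β / 2) : ℝ) * Complex.I) *
      (Real.Gamma (1 - α * β) : ℂ)).im =
      1 / Real.pi * Real.Gamma (1 - α * β) * Real.sin (Real.pi * α * β / 2) := by
    rw [Complex.im_mul_ofReal, Complex.exp_ofReal_mul_I_im, Real.sin_neg]
    ring
  rw [e] at h2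
  refine h2.congr' ?_
  filter_upwards [self_mem_nhdsWithin] with ω hω
  simp only [Function.comp]
  rw [← gfgcc_subst _ α β ω hω, Complex.im_ofReal_mul, gfgccSpectralDensity]
  ring
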